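/- Let α be a composition, l = max{i : α_i ≠ 0}, and n = max{l, α_1, ..., α_l}. Then the Newton polytope of the key polynomial κ_α equals the Schubitope S_{D(α)} of the skyline diagram D(α) of α. -/

import Mathlib

open Finset MvPolynomial

/-- Auxiliary greedy matching count for a parenthesis word (`true` = '(', `false` = ')'),
given the current number of unmatched open parentheses. -/
def matchedPairsAux : List Bool → ℕ → ℕ
  | [], _ => 0
  | true :: rest, o => matchedPairsAux rest (o + 1)
  | false :: rest, 0 => matchedPairsAux rest 0
  | false :: rest, o + 1 => matchedPairsAux rest o + 1

/-- The number of paired `()`'s in a parenthesis word (`true` = '(', `false` = ')'). -/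
def matchedPairs (w : List Bool) : ℕ := matchedPairsAux w 0

/-- Column `j` of a diagram `D`: the set `D_j = {i : (i,j) ∈ D}`. -/
def colSetNat (D : Finset (ℕ × ℕ)) (j : ℕ) : Finset ℕ :=
  (D.filter fun p => p.2 = j).image Prod.fst

/-- The parenthesis part of `word_{j,I}(D)`: reading rows `i = 0, …, n-1` from top to
bottom, record '(' (= `true`) if `(i,j) ∉ D` and `i ∈ I`, and ')' (= `false`) if
`(i,j) ∈ D` and `i ∉ I`.  (The `⋆`'s play no role in the matching.) -/
def colWordNat (n : ℕ) (D : Finset (ℕ × ℕ)) (j : ℕ) (I : Finset ℕ) : List Bool :=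
  (List.range n).filterMap fun i =>
    if (i, j) ∈ D then (if i ∈ I then none else some false)
    else (if i ∈ I then some true else none)

/-- `θ_D^j(I)`: the number of paired `()`'s plus the number of `⋆`'s in `word_{j,I}(D)`. -/
def thetaColNat (n : ℕ) (D : Finset (ℕ × ℕ)) (j : ℕ) (I : Finset ℕ) : ℕ :=
  matchedPairs (colWordNat n D j I) + (colSetNat D j ∩ I).card

/-- `θ_D(I) = Σ_{j=1}^n θ_D^j(I)`. -/
def thetaNat (n : ℕ) (D : Finset (ℕ × ℕ)) (I : Finset ℕ) : ℕ :=
  ∑ j ∈ Finset.range n, thetaColNat n D j I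

/-- The Schubitope `S_D ⊆ ℝ^n` of a diagram `D ⊆ [n]²`, viewed inside `ℝ^ℕ` (coordinates
beyond the `n`-th vanish). -/
def schubitopeNat (n : ℕ) (D : Finset (ℕ × ℕ)) : Set (ℕ → ℝ) :=
  {a | (∀ i, 0 ≤ a i) ∧ (∀ i, n ≤ i → a i = 0) ∧
    (∑ i ∈ Finset.range n, a i) = (D.card : ℝ) ∧
    ∀ I ⊆ Finset.range n, ∑ i ∈ I, a i ≤ (thetaNat n D I : ℝ)}

/-- The skyline diagram of a composition `α`, inside `[n]²` (`0`-indexed): row `i`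
contains the boxes in columns `0, …, α_{i+1} - 1`. -/
def skyline (α : ℕ →₀ ℕ) (n : ℕ) : Finset (ℕ × ℕ) :=
  (Finset.range n ×ˢ Finset.range n).filter fun p => p.2 < α p.1

/-- The Newton polytope of a polynomial in the variables `x_1, x_2, …`. -/
def newtonPolytopeNat (f : MvPolynomial ℕ ℤ) : Set (ℕ → ℝ) :=
  convexHull ℝ ((fun (d : ℕ →₀ ℕ) (i : ℕ) => ((d i : ℕ) : ℝ)) '' ↑f.support)

/-!
The number `θ_D^j(I)` is a minimum over cuts `k` of `#{x ∈ I | x < k} + #{x ∈ D_j | k ≤ x}`. When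
`i ∈ D_j → i + 1 ∈ D_j`, as holds for the columns of the skyline diagram of `α` with
`α i < α (i + 1)`, the cut at `i + 1` is at least one of its neighbours, and it is the only cut that
distinguishes `i` from `i + 1`. Hence `θ_{D(α)}` is invariant under swapping `i` and `i + 1`, is at
least `θ_{D(α̂)}`, and agrees with it on every `I` with `i + 1 ∈ I → i ∈ I`.

This is what the Demazure operator needs to transfer the following property from `κ_α̂` to `κ_α`:
all exponents satisfy the inequalities given by `θ`, and for every linear order of the variables
there is an exponent at which the inequalities of all initial segments are tight. By the greedy
algorithm this property identifies the Newton polytope with the polytope cut out by `θ`. Swapping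
away ascents reduces everything to weakly decreasing `α`, where `κ_α` is a monomial.
-/

section BasePolytope

variable {ι K : Type*} {s I : Finset ι}

/-- The base polytope of a set function `θ` on the subsets of `s`; points are extended by zero
outside `s`. -/
def basePolytope [AddCommMonoid K] [LE K] (s : Finset ι) (θ : Finset ι → K) : Set (ι → K) :=
  {a | (∀ i, 0 ≤ a i) ∧ (∀ i ∉ s, a i = 0) ∧ ∑ i ∈ s, a i = θ s ∧ ∀ I ⊆ s, ∑ i ∈ I, a i ≤ θ I}

theorem natCast_mem_basePolytope_iff {θ : Finset ι → ℕ} {a : ι → ℕ} :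
    (fun i => (a i : ℝ)) ∈ basePolytope s (fun I => (θ I : ℝ)) ↔ a ∈ basePolytope s θ := by
  simp only [basePolytope, Set.mem_ofPred_eq]
  norm_cast

theorem convex_basePolytope (s : Finset ι) (θ : Finset ι → ℝ) : Convex ℝ (basePolytope s θ) := by
  rintro a ⟨ha₀, ha_off, ha_sum, ha_le⟩ b ⟨hb₀, hb_off, hb_sum, hb_le⟩ x y hx hy hxy
  have sum_comb (I : Finset ι) :
      ∑ i ∈ I, (x • a + y • b) i = x • ∑ i ∈ I, a i + y • ∑ i ∈ I, b i := by
    simp [sum_add_distrib, mul_sum]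
  refine ⟨fun i => convex_Ici (0 : ℝ) (ha₀ i) (hb₀ i) hx hy hxy, fun i hi => ?_, ?_, fun I hI => ?_⟩
  · simp [ha_off i hi, hb_off i hi]
  · rw [sum_comb]
    exact convex_singleton (θ s) ha_sum hb_sum hx hy hxy
  · rw [sum_comb]
    exact convex_Iic (θ I) (ha_le I hI) (hb_le I hI) hx hy hxy

theorem map_perm_subset {e : Equiv.Perm ι} (hs : ∀ x, e x ∈ s ↔ x ∈ s) (hI : I ⊆ s) :
    I.map e.toEmbedding ⊆ s := by
  intro x hx
  obtain ⟨y, hy, rfl⟩ := mem_map.1 hx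
  exact (hs y).2 (hI hy)

theorem comp_perm_mem_basePolytope [AddCommMonoid K] [LE K] {θ : Finset ι → K} {a : ι → K}
    {e : Equiv.Perm ι} (hs : ∀ x, e x ∈ s ↔ x ∈ s)
    (hθ : ∀ I ⊆ s, θ (I.map e.toEmbedding) = θ I) (ha : a ∈ basePolytope s θ) :
    a ∘ e ∈ basePolytope s θ := by
  obtain ⟨ha₀, ha_off, ha_sum, ha_le⟩ := ha
  have sum_comp (I : Finset ι) : ∑ i ∈ I, (a ∘ e) i = ∑ i ∈ I.map e.toEmbedding, a i := by
    simp
  have map_self : s.map e.toEmbedding = s :=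
    eq_of_subset_of_card_le (map_perm_subset hs subset_rfl) (card_map _).ge
  refine ⟨fun i => ha₀ _, fun i hi => ha_off _ (by rwa [hs]), ?_, fun I hI => ?_⟩
  · rw [sum_comp, map_self, ha_sum]
  · rw [sum_comp, ← hθ I hI]
    exact ha_le _ (map_perm_subset hs hI)

end BasePolytope

section Greedy

variable {ι P K : Type*} {s I : Finset ι}

/-- `I` is an initial segment of `s` when the elements of `s` are listed by increasing rank `p`. -/
def IsInitialSegment [LE P] (p : ι → P) (s I : Finset ι) : Prop :=
  I ⊆ s ∧ ∀ x ∈ I, ∀ y ∈ s, p y ≤ p x → y ∈ I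

theorem isInitialSegment_self [LE P] (p : ι → P) (s : Finset ι) : IsInitialSegment p s s :=
  ⟨subset_rfl, fun _ _ _ hy _ => hy⟩

theorem IsInitialSegment.insert [PartialOrder P] [DecidableEq ι] {p : ι → P}
    (hp : Function.Injective p) {m : ι} (hm : m ∉ s) (hmax : ∀ x ∈ s, p x ≤ p m)
    (hI : IsInitialSegment p s I) :
    IsInitialSegment p (insert m s) I := by
  refine ⟨hI.1.trans (subset_insert m s), fun x hx y hy hyx => ?_⟩
  rcases mem_insert.1 hy with rfl | hy
  · have hxy : x = y := hp (le_antisymm (hmax x (hI.1 hx)) hyx)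
    exact absurd (hxy ▸ hI.1 hx) hm
  · exact hI.2 x hx y hy hyx

/-- Abel summation: weights that decrease along the ranking turn nonnegative partial sums into a
nonnegative pairing. -/
theorem mul_sum_le_sum_mul_of_initialSegment_nonneg [LinearOrder P] [CommRing K] [LinearOrder K]
    [IsStrictOrderedRing K] {p : ι → P} (hp : Function.Injective p) {c b : ι → K} {t : K}
    (hc : ∀ x y, p x ≤ p y → c y ≤ c x) (hb : ∀ I, IsInitialSegment p s I → 0 ≤ ∑ x ∈ I, b x)
    (ht : ∀ x ∈ s, t ≤ c x) : t * ∑ x ∈ s, b x ≤ ∑ x ∈ s, c x * b x := by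
  classical
  induction s using Finset.induction_on_max_value p generalizing t with
  | empty => simp
  | insert m s hm hmax ih =>
    have hs : c m * ∑ x ∈ s, b x ≤ ∑ x ∈ s, c x * b x :=
      ih (fun I hI => hb I (hI.insert hp hm hmax)) fun x hx => hc x m (hmax x hx)
    calc t * ∑ x ∈ insert m s, b x
        ≤ c m * ∑ x ∈ insert m s, b x :=
          mul_le_mul_of_nonneg_right (ht m (mem_insert_self m s)) (hb _ (isInitialSegment_self p _))
      _ = c m * b m + c m * ∑ x ∈ s, b x := by rw [sum_insert hm, mul_add]
      _ ≤ c m * b m + ∑ x ∈ s, c x * b x := by gcongr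
      _ = ∑ x ∈ insert m s, c x * b x := by rw [sum_insert hm]

theorem sum_mul_le_sum_mul_of_tight [LinearOrder P] [CommRing K] [LinearOrder K]
    [IsStrictOrderedRing K] {p : ι → P} (hp : Function.Injective p) {c a v : ι → K}
    {θ : Finset ι → K} (hc : ∀ x y, p x ≤ p y → c y ≤ c x) (ha : a ∈ basePolytope s θ)
    (hv : ∀ I, IsInitialSegment p s I → ∑ x ∈ I, v x = θ I) :
    ∑ x ∈ s, c x * a x ≤ ∑ x ∈ s, c x * v x := by
  classical
  obtain ⟨-, -, ha_sum, ha_le⟩ := ha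
  obtain ⟨t, ht⟩ := (s.image c).bddBelow
  have partial_sum_nonneg (I : Finset ι) (hI : IsInitialSegment p s I) :
      0 ≤ ∑ x ∈ I, (v x - a x) := by
    rw [sum_sub_distrib, hv I hI, sub_nonneg]
    exact ha_le I hI.1
  have total_eq_zero : ∑ x ∈ s, (v x - a x) = 0 := by
    rw [sum_sub_distrib, hv s (isInitialSegment_self p s), ha_sum, sub_self]
  have := mul_sum_le_sum_mul_of_initialSegment_nonneg hp hc partial_sum_nonneg
    fun x hx => ht (mem_coe.2 (mem_image_of_mem c hx))
  simpa only [total_eq_zero, mul_zero, mul_sub, sum_sub_distrib, sub_nonneg] using this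

theorem convexHull_eq_of_forall_exists_le {E : Type*} [AddCommGroup E] [Module ℝ E]
    [TopologicalSpace E] [IsTopologicalAddGroup E] [ContinuousSMul ℝ E] [LocallyConvexSpace ℝ E]
    [T2Space E] {V B : Set E} (hV : V.Finite) (hB : Convex ℝ B) (hVB : V ⊆ B)
    (h : ∀ φ : E →L[ℝ] ℝ, ∀ a ∈ B, ∃ v ∈ V, φ a ≤ φ v) : convexHull ℝ V = B := by
  refine (convexHull_min hVB hB).antisymm fun a ha => by_contra fun hna => ?_
  obtain ⟨φ, u, hφ_lt, hφ_gt⟩ :=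
    geometric_hahn_banach_closed_point (convex_convexHull ℝ V) (hV.isClosed_convexHull ℝ) hna
  obtain ⟨v, hv, hav⟩ := h φ a ha
  exact (hφ_gt.trans_le hav).not_gt (hφ_lt v (subset_convexHull ℝ V hv))

theorem map_eq_sum_mul_of_support_subset [DecidableEq ι] (φ : (ι → ℝ) →ₗ[ℝ] ℝ) {a : ι → ℝ}
    (ha : ∀ i ∉ s, a i = 0) : φ a = ∑ i ∈ s, φ (Pi.single i 1) * a i := by
  have ha_eq : a = ∑ i ∈ s, a i • Pi.single i (1 : ℝ) := by
    ext j
    by_cases hj : j ∈ s <;> simp [Finset.sum_apply, Pi.single_apply, hj, ha]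
  conv_lhs => rw [ha_eq]
  simp [mul_comm]

/-- A linear functional is maximised greedily: rank the coordinates by decreasing weight, breaking
ties by the order of `ι`. -/
theorem convexHull_eq_basePolytope [LinearOrder ι] {V : Set (ι → ℝ)} {θ : Finset ι → ℝ}
    (hfin : V.Finite) (hsub : V ⊆ basePolytope s θ)
    (htight : ∀ p : ι → ℝ ×ₗ ι, Function.Injective p →
      ∃ v ∈ V, ∀ I, IsInitialSegment p s I → ∑ x ∈ I, v x = θ I) :
    convexHull ℝ V = basePolytope s θ := by
  refine convexHull_eq_of_forall_exists_le hfin (convex_basePolytope s θ) hsub fun φ a ha => ?_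
  let c (x : ι) : ℝ := φ (Pi.single x 1)
  let p (x : ι) : ℝ ×ₗ ι := toLex (-c x, x)
  have hp : Function.Injective p := fun x y h => congrArg (fun q => (ofLex q).2) h
  have hc (x y : ι) (h : p x ≤ p y) : c y ≤ c x := by
    rcases Prod.Lex.toLex_le_toLex.1 h with h | h
    · exact (neg_lt_neg_iff.1 h).le
    · exact (neg_injective h.1).ge
  obtain ⟨v, hvV, hv⟩ := htight p hp
  have map_eq {w : ι → ℝ} (hw : w ∈ basePolytope s θ) : φ w = ∑ x ∈ s, c x * w x :=
    map_eq_sum_mul_of_support_subset (φ : (ι → ℝ) →ₗ[ℝ] ℝ) hw.2.1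
  refine ⟨v, hvV, ?_⟩
  rw [map_eq ha, map_eq (hsub hvV)]
  exact sum_mul_le_sum_mul_of_tight hp hc ha hv

end Greedy

universe u

section SpansBasePolytope

variable {ι : Type u} {R : Type*}

/-- The exponents of `f` lie in the base polytope of `θ`, and for every ranking of the variables one
of them is the vertex produced by the greedy algorithm. This makes the base polytope the Newton
polytope of `f`, in a form that can be carried through a Demazure operator. -/
structure SpansBasePolytope [CommSemiring R] (s : Finset ι) (θ : Finset ι → ℕ)
    (f : MvPolynomial ι R) : Prop where
  mem_basePolytope : ∀ d ∈ f.support, ⇑d ∈ basePolytope s θ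
  exists_tight : ∀ {P : Type u} [LinearOrder P] {p : ι → P}, Function.Injective p →
    ∃ v ∈ f.support, ∀ I, IsInitialSegment p s I → ∑ x ∈ I, v x = θ I

theorem SpansBasePolytope.convexHull_eq [CommSemiring R] {s : Finset ι}
    {θ : Finset ι → ℕ} {f : MvPolynomial ι R} (hf : SpansBasePolytope s θ f) :
    convexHull ℝ ((fun (d : ι →₀ ℕ) (i : ι) => (d i : ℝ)) '' f.support) =
      basePolytope s fun I => (θ I : ℝ) := by
  let _ : LinearOrder ι := IsWellOrder.linearOrder WellOrderingRel
  refine convexHull_eq_basePolytope (f.support.finite_toSet.image _) ?_ fun p hp => ?_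
  · rintro _ ⟨d, hd, rfl⟩
    exact natCast_mem_basePolytope_iff.2 (hf.mem_basePolytope d hd)
  · obtain ⟨v, hv, hv_tight⟩ := hf.exists_tight hp
    exact ⟨_, Set.mem_image_of_mem _ hv, fun I hI => by exact_mod_cast hv_tight I hI⟩

end SpansBasePolytope

section Transposition

variable {ι : Type*} {R : Type*} {i j : ι}

theorem sum_add_ite_of_add_single_eq [DecidableEq ι] {d e : ι →₀ ℕ} {k : ℕ}
    (h : e + Finsupp.single j k = d + Finsupp.single i k) (I : Finset ι) :
    ∑ x ∈ I, e x + (if j ∈ I then k else 0) = ∑ x ∈ I, d x + (if i ∈ I then k else 0) := by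
  simpa [sum_add_distrib, Finsupp.single_apply] using congrArg (fun w : ι →₀ ℕ => ∑ x ∈ I, w x) h

variable [DecidableEq ι]

@[simp]
theorem equivMapDomain_swap_self (d : ι →₀ ℕ) :
    Finsupp.equivMapDomain (Equiv.swap i j) (Finsupp.equivMapDomain (Equiv.swap i j) d) = d := by
  ext x
  simp [Finsupp.equivMapDomain_apply]

theorem coe_equivMapDomain_swap (d : ι →₀ ℕ) :
    ⇑(Finsupp.equivMapDomain (Equiv.swap i j) d) = d ∘ Equiv.swap i j := by
  ext x
  simp [Finsupp.equivMapDomain_apply]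

theorem coeff_rename_swap [CommSemiring R] (d : ι →₀ ℕ) (f : MvPolynomial ι R) :
    coeff d (rename (Equiv.swap i j) f) = coeff (Finsupp.equivMapDomain (Equiv.swap i j) d) f := by
  rw [← coeff_rename_mapDomain _ (Equiv.swap i j).injective f,
    ← Finsupp.equivMapDomain_eq_mapDomain, equivMapDomain_swap_self]

theorem swap_apply_mem_iff {s : Finset ι} (hi : i ∈ s) (hj : j ∈ s) (x : ι) :
    Equiv.swap i j x ∈ s ↔ x ∈ s := by
  rw [Equiv.swap_apply_def]
  split_ifs <;> simp_all

theorem equivMapDomain_swap_mem_basePolytope {s : Finset ι} {θ : Finset ι → ℕ} {d : ι →₀ ℕ}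
    (hi : i ∈ s) (hj : j ∈ s) (hθ : ∀ I ⊆ s, θ (I.map (Equiv.swap i j).toEmbedding) = θ I)
    (hd : ⇑d ∈ basePolytope s θ) :
    ⇑(Finsupp.equivMapDomain (Equiv.swap i j) d) ∈ basePolytope s θ := by
  rw [coe_equivMapDomain_swap]
  exact comp_perm_mem_basePolytope (swap_apply_mem_iff hi hj) hθ hd

theorem IsInitialSegment.map_swap {P : Type*} [LE P] {p : ι → P} {s I : Finset ι}
    (hi : i ∈ s) (hj : j ∈ s) (hI : IsInitialSegment p s I) :
    IsInitialSegment (p ∘ Equiv.swap i j) s (I.map (Equiv.swap i j).toEmbedding) := by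
  refine ⟨map_perm_subset (swap_apply_mem_iff hi hj) hI.1, fun x hx y hy hyx => ?_⟩
  rw [mem_map_equiv, Equiv.symm_swap] at hx ⊢
  exact hI.2 _ hx _ ((swap_apply_mem_iff hi hj y).2 hy) hyx

end Transposition

section Demazure

variable {ι : Type u} {R : Type*} [DecidableEq ι] [CommRing R] {i j : ι} {f g : MvPolynomial ι R}

/-- `g = ∂ᵢⱼ(xᵢ f)`: the polynomial `g` is the image of `f` under the Demazure operator (isobaric
divided difference) of the transposition `(i j)`, with the denominator `xᵢ - xⱼ` cleared. -/
def IsDemazure (i j : ι) (f g : MvPolynomial ι R) : Prop :=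
  (X i - X j) * g = X i * f - rename (Equiv.swap i j) (X i * f)

namespace IsDemazure

theorem coeff_eq_of_eq_zero (h : IsDemazure i j f g) (hij : i ≠ j) {d : ι →₀ ℕ} (hd : d j = 0) :
    coeff d g = coeff d f := by
  have := congrArg (coeff (d + Finsupp.single i 1)) h
  simpa [sub_mul, coeff_X_mul', hd, hij] using this

theorem coeff_sub_coeff (h : IsDemazure i j f g) (d : ι →₀ ℕ) :
    coeff (d + Finsupp.single j 1) g - coeff (d + Finsupp.single i 1) g =
      coeff (d + Finsupp.single j 1) f -
        coeff (Finsupp.equivMapDomain (Equiv.swap i j) (d + Finsupp.single i 1)) f := by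
  have coeff_X_mul_left (p : MvPolynomial ι R) :
      coeff (d + Finsupp.single j 1 + Finsupp.single i 1) (X i * p) =
        coeff (d + Finsupp.single j 1) p := by
    rw [mul_comm, coeff_mul_X]
  have coeff_X_mul_right (p : MvPolynomial ι R) :
      coeff (d + Finsupp.single j 1 + Finsupp.single i 1) (X j * p) =
        coeff (d + Finsupp.single i 1) p := by
    rw [add_right_comm, mul_comm, coeff_mul_X]
  have := congrArg (coeff (d + Finsupp.single j 1 + Finsupp.single i 1)) h
  simpa only [sub_mul, coeff_sub, map_mul, rename_X, Equiv.swap_apply_left, coeff_X_mul_left,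
    coeff_X_mul_right, coeff_rename_swap] using this

theorem rename_swap_eq [IsDomain R] (h : IsDemazure i j f g) (hij : i ≠ j) :
    rename (Equiv.swap i j) g = g := by
  have rename_swap_swap (p : MvPolynomial ι R) :
      rename (Equiv.swap i j) (rename (Equiv.swap i j) p) = p := by
    ext d
    simp only [coeff_rename_swap, equivMapDomain_swap_self]
  have hX : (X i - X j : MvPolynomial ι R) ≠ 0 := sub_ne_zero.2 (X_injective.ne hij)
  have h' : (X j - X i) * rename (Equiv.swap i j) g =
      rename (Equiv.swap i j) (X i * f) - X i * f := by
    have := congrArg (rename (Equiv.swap i j)) h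
    rwa [map_sub, rename_swap_swap, map_mul, map_sub, rename_X, rename_X, Equiv.swap_apply_left,
      Equiv.swap_apply_right] at this
  refine mul_left_cancel₀ hX ?_
  rw [IsDemazure] at h
  linear_combination -h' - h

theorem equivMapDomain_swap_mem_support [IsDomain R] (h : IsDemazure i j f g) (hij : i ≠ j)
    {d : ι →₀ ℕ} (hd : d ∈ g.support) :
    Finsupp.equivMapDomain (Equiv.swap i j) d ∈ g.support := by
  rwa [mem_support_iff, ← coeff_rename_swap, h.rename_swap_eq hij, ← mem_support_iff]

theorem exists_add_single_eq (h : IsDemazure i j f g) (hij : i ≠ j) {d : ι →₀ ℕ}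
    (hd : d ∈ g.support) :
    ∃ (e : ι →₀ ℕ) (k : ℕ), e + Finsupp.single j k = d + Finsupp.single i k ∧
      (e ∈ f.support ∨ Finsupp.equivMapDomain (Equiv.swap i j) e ∈ f.support) := by
  simp only [mem_support_iff] at hd ⊢
  induction hm : d j generalizing d with
  | zero => exact ⟨d, 0, by simp, Or.inl (h.coeff_eq_of_eq_zero hij hm ▸ hd)⟩
  | succ m ih =>
    obtain ⟨c, rfl⟩ : ∃ c, d = c + Finsupp.single j 1 :=
      ⟨d - Finsupp.single j 1, (tsub_add_cancel_of_le (by simp [hm])).symm⟩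
    have hrec := h.coeff_sub_coeff c
    by_cases hg : coeff (c + Finsupp.single i 1) g = 0
    · by_cases hf : coeff (c + Finsupp.single j 1) f = 0
      · refine ⟨c + Finsupp.single i 1, 1, add_right_comm _ _ _, Or.inr fun hf' => hd ?_⟩
        simpa only [hg, hf, hf', sub_zero] using hrec
      · exact ⟨c + Finsupp.single j 1, 0, by simp, Or.inl hf⟩
    · obtain ⟨e, k, hek, he⟩ := ih hg (by simpa [hij] using hm)
      refine ⟨e, k + 1, ?_, he⟩
      rw [Finsupp.single_add, Finsupp.single_add, ← add_assoc, hek]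
      abel

theorem exists_mem_basePolytope_add_single_eq {s : Finset ι} {θ : Finset ι → ℕ}
    (h : IsDemazure i j f g) (hij : i ≠ j) (hi : i ∈ s) (hj : j ∈ s)
    (hθ : ∀ I ⊆ s, θ (I.map (Equiv.swap i j).toEmbedding) = θ I)
    (hf : ∀ d ∈ f.support, ⇑d ∈ basePolytope s θ) {d : ι →₀ ℕ} (hd : d ∈ g.support) :
    ∃ (e : ι →₀ ℕ) (k : ℕ), e + Finsupp.single j k = d + Finsupp.single i k ∧
      ⇑e ∈ basePolytope s θ := by
  obtain ⟨e, k, hek, he | he⟩ := h.exists_add_single_eq hij hd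
  · exact ⟨e, k, hek, hf e he⟩
  · refine ⟨e, k, hek, ?_⟩
    simpa only [equivMapDomain_swap_self] using
      equivMapDomain_swap_mem_basePolytope hi hj hθ (hf _ he)

/-- Exponents of `g` arise from exponents of `f`, up to the symmetry `(i j)`, by moving degree from
`xᵢ` to `xⱼ`. This cannot increase sums over the sets containing `i` or missing `j`, and the
symmetry of `g` and `θ` takes care of the others. -/
theorem mem_basePolytope [IsDomain R] {s : Finset ι} {θ : Finset ι → ℕ} (h : IsDemazure i j f g)
    (hij : i ≠ j) (hi : i ∈ s) (hj : j ∈ s)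
    (hθ : ∀ I ⊆ s, θ (I.map (Equiv.swap i j).toEmbedding) = θ I)
    (hf : ∀ d ∈ f.support, ⇑d ∈ basePolytope s θ) {d : ι →₀ ℕ} (hd : d ∈ g.support) :
    ⇑d ∈ basePolytope s θ := by
  have sum_le {d : ι →₀ ℕ} (hd : d ∈ g.support) {I : Finset ι} (hI : I ⊆ s)
      (hji : j ∈ I → i ∈ I) : ∑ x ∈ I, d x ≤ θ I := by
    obtain ⟨e, k, hek, -, -, -, he_le⟩ := h.exists_mem_basePolytope_add_single_eq hij hi hj hθ hf hd
    have hsum := sum_add_ite_of_add_single_eq hek I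
    have := he_le I hI
    split_ifs at hsum <;> grind
  obtain ⟨e, k, hek, -, he_off, he_sum, -⟩ :=
    h.exists_mem_basePolytope_add_single_eq hij hi hj hθ hf hd
  refine ⟨fun x => zero_le, fun x hx => ?_, ?_, fun I hI => ?_⟩
  · have := DFunLike.congr_fun hek x
    have hed : e x = d x := by
      simpa [ne_of_mem_of_not_mem hi hx, ne_of_mem_of_not_mem hj hx] using this
    exact hed.symm.trans (he_off x hx)
  · have hed : ∑ x ∈ s, e x = ∑ x ∈ s, d x := by
      simpa [hi, hj] using sum_add_ite_of_add_single_eq hek s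
    exact hed.symm.trans he_sum
  · by_cases hji : j ∈ I → i ∈ I
    · exact sum_le hd hI hji
    · obtain ⟨hjI, -⟩ := Classical.not_imp.1 hji
      have hI' : I.map (Equiv.swap i j).toEmbedding ⊆ s :=
        map_perm_subset (swap_apply_mem_iff hi hj) hI
      calc ∑ x ∈ I, d x
          = ∑ x ∈ I.map (Equiv.swap i j).toEmbedding,
              Finsupp.equivMapDomain (Equiv.swap i j) d x := by
            simp [Finsupp.equivMapDomain_apply]
        _ ≤ θ (I.map (Equiv.swap i j).toEmbedding) :=
            sum_le (h.equivMapDomain_swap_mem_support hij hd) hI' (by simp [mem_map_equiv, hjI])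
        _ = θ I := hθ I hI

end IsDemazure

variable {s : Finset ι} {θ θ' : Finset ι → ℕ}

/-- The term of `f` with exponent `v` survives in `g` because moving one unit of degree from `xⱼ` to
`xᵢ` would violate the tight constraint of an initial segment containing `i` but not `j`. -/
theorem IsDemazure.mem_support_of_tight {P : Type*} [LinearOrder P] {p : ι → P}
    (h : IsDemazure i j f g) (hi : i ∈ s) (hj : j ∈ s)
    (hθ : ∀ I ⊆ s, θ (I.map (Equiv.swap i j).toEmbedding) = θ I)
    (hf : ∀ d ∈ f.support, ⇑d ∈ basePolytope s θ) (hg : ∀ d ∈ g.support, ⇑d ∈ basePolytope s θ)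
    (hpij : p i < p j) {v : ι →₀ ℕ} (hv : v ∈ f.support)
    (hv_tight : ∀ I, IsInitialSegment p s I → ∑ x ∈ I, v x = θ I) : v ∈ g.support := by
  have hij : i ≠ j := fun hij => hpij.ne (congrArg p hij)
  by_cases hvj : v j = 0
  · rwa [mem_support_iff, h.coeff_eq_of_eq_zero hij hvj, ← mem_support_iff]
  obtain ⟨c, rfl⟩ : ∃ c, v = c + Finsupp.single j 1 :=
    ⟨v - Finsupp.single j 1, (tsub_add_cancel_of_le (by simpa [Nat.one_le_iff_ne_zero])).symm⟩
  have not_mem : ⇑(c + Finsupp.single i 1 : ι →₀ ℕ) ∉ basePolytope s θ := by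
    rintro ⟨-, -, -, hle⟩
    let I : Finset ι := {x ∈ s | p x ≤ p i}
    have hI : IsInitialSegment p s I :=
      ⟨filter_subset _ s, fun x hx y hy hyx =>
        mem_filter.2 ⟨hy, hyx.trans (mem_filter.1 hx).2⟩⟩
    have hiI : i ∈ I := by simp [I, hi]
    have hjI : j ∉ I := by simp [I, hpij]
    have hsum := sum_add_ite_of_add_single_eq
      (add_right_comm c (Finsupp.single i 1) (Finsupp.single j 1)) I
    rw [if_neg hjI, if_pos hiI, hv_tight I hI] at hsum
    have := hle I hI.1
    omega
  have hg_zero : coeff (c + Finsupp.single i 1) g = 0 :=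
    notMem_support_iff.1 fun hc => not_mem (hg _ hc)
  have hf_zero :
      coeff (Finsupp.equivMapDomain (Equiv.swap i j) (c + Finsupp.single i 1)) f = 0 := by
    refine notMem_support_iff.1 fun hc => not_mem ?_
    simpa only [equivMapDomain_swap_self] using
      equivMapDomain_swap_mem_basePolytope hi hj hθ (hf _ hc)
  have hrec := h.coeff_sub_coeff c
  rw [hg_zero, hf_zero, sub_zero, sub_zero] at hrec
  rwa [mem_support_iff, hrec, ← mem_support_iff]

theorem SpansBasePolytope.of_isDemazure [IsDomain R] (hf : SpansBasePolytope s θ' f)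
    (h : IsDemazure i j f g) (hij : i ≠ j) (hi : i ∈ s) (hj : j ∈ s)
    (hθ : ∀ I ⊆ s, θ (I.map (Equiv.swap i j).toEmbedding) = θ I)
    (hle : ∀ I ⊆ s, θ' I ≤ θ I) (heq : ∀ I ⊆ s, (j ∈ I → i ∈ I) → θ' I = θ I) :
    SpansBasePolytope s θ g := by
  have hf_mem (d : ι →₀ ℕ) (hd : d ∈ f.support) : ⇑d ∈ basePolytope s θ := by
    obtain ⟨hd₀, hd_off, hd_sum, hd_le⟩ := hf.mem_basePolytope d hd
    exact ⟨hd₀, hd_off, hd_sum.trans (heq s subset_rfl fun _ => hi),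
      fun I hI => (hd_le I hI).trans (hle I hI)⟩
  have hg_mem (d : ι →₀ ℕ) (hd : d ∈ g.support) : ⇑d ∈ basePolytope s θ :=
    h.mem_basePolytope hij hi hj hθ hf_mem hd
  have exists_tight_of_lt {P : Type u} [LinearOrder P] {p : ι → P} (hp : Function.Injective p)
      (hpij : p i < p j) :
      ∃ v ∈ g.support, ∀ I, IsInitialSegment p s I → ∑ x ∈ I, v x = θ I := by
    obtain ⟨v, hv, hv_tight⟩ := hf.exists_tight hp
    have hv_tight' (I : Finset ι) (hI : IsInitialSegment p s I) : ∑ x ∈ I, v x = θ I :=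
      (hv_tight I hI).trans (heq I hI.1 fun hjI => hI.2 j hjI i hi hpij.le)
    exact ⟨v, h.mem_support_of_tight hi hj hθ hf_mem hg_mem hpij hv hv_tight', hv_tight'⟩
  refine ⟨hg_mem, fun {P} _ p hp => ?_⟩
  rcases (hp.ne hij).lt_or_gt with hpij | hpji
  · exact exists_tight_of_lt hp hpij
  · obtain ⟨v, hv, hv_tight⟩ :=
      exists_tight_of_lt (hp.comp (Equiv.swap i j).injective) (by simpa using hpji)
    refine ⟨_, h.equivMapDomain_swap_mem_support hij hv, fun I hI => ?_⟩
    rw [← hθ I hI.1, ← hv_tight _ (hI.map_swap hi hj)]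
    simp [Finsupp.equivMapDomain_apply]

end Demazure

section SchubertRank

variable {D I : Finset ℕ} {i m n k : ℕ}

/-- The capacity of the cut at `k` in the bipartite graph that joins each element of `I` to the
elements of `D` that do not precede it. -/
def schubertCut (D I : Finset ℕ) (k : ℕ) : ℕ :=
  #{x ∈ I | x < k} + #{x ∈ D | k ≤ x}

/-- The rank of `I` in the Schubert matroid of `D`, as the minimum over the cuts. For the `j`-th
column `D_j` of a diagram `D` it is `θ_D^j(I)`, see `thetaColNat_eq_schubertRank`. -/
noncomputable def schubertRank (D I : Finset ℕ) : ℕ :=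
  ⨅ k, schubertCut D I k

theorem schubertRank_le_schubertCut (D I : Finset ℕ) (k : ℕ) :
    schubertRank D I ≤ schubertCut D I k :=
  ciInf_le' _ k

theorem le_schubertRank_iff : m ≤ schubertRank D I ↔ ∀ k, m ≤ schubertCut D I k :=
  le_ciInf_iff'

theorem schubertCut_succ (D I : Finset ℕ) (k : ℕ) :
    schubertCut D I (k + 1) + (if k ∈ D then 1 else 0) =
      schubertCut D I k + (if k ∈ I then 1 else 0) := by
  have card_lt : #{x ∈ I | x < k + 1} = #{x ∈ I | x < k} + if k ∈ I then 1 else 0 := by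
    simp only [card_filter]
    rw [← sum_ite_eq' I k fun _ => 1, ← sum_add_distrib]
    exact sum_congr rfl fun x _ => by split_ifs <;> omega
  have card_le : #{x ∈ D | k ≤ x} = #{x ∈ D | k + 1 ≤ x} + if k ∈ D then 1 else 0 := by
    simp only [card_filter]
    rw [← sum_ite_eq' D k fun _ => 1, ← sum_add_distrib]
    exact sum_congr rfl fun x _ => by split_ifs <;> omega
  simp only [schubertCut]
  omega

theorem card_inter_le_schubertRank (D I : Finset ℕ) : #(D ∩ I) ≤ schubertRank D I := by
  refine le_schubertRank_iff.2 fun k => ?_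
  rw [← card_filter_add_card_filter_not (· < k)]
  simp only [not_lt]
  exact add_le_add (card_le_card (filter_subset_filter _ inter_subset_right))
    (card_le_card (filter_subset_filter _ inter_subset_left))

theorem schubertRank_eq_card_of_subset (h : D ⊆ I) : schubertRank D I = #D := by
  refine le_antisymm ?_ ?_
  · simpa [schubertCut] using schubertRank_le_schubertCut D I 0
  · simpa only [inter_eq_left.2 h] using card_inter_le_schubertRank D I

theorem schubertRank_eq_card_inter_of_isLowerSet (h : IsLowerSet (D : Set ℕ)) :
    schubertRank D I = #(D ∩ I) := by
  refine le_antisymm ?_ (card_inter_le_schubertRank D I)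
  obtain ⟨k, rfl⟩ : ∃ k, D = range k := by
    obtain hD | ⟨k, hk⟩ := h.eq_univ_or_Iio
    · exact absurd (hD ▸ D.finite_toSet) Set.infinite_univ
    · exact ⟨k, by simpa [← coe_inj] using hk⟩
  refine (schubertRank_le_schubertCut _ I k).trans_eq ?_
  have h_lt : {x ∈ I | x < k} = range k ∩ I := by grind
  have h_le : {x ∈ range k | k ≤ x} = ∅ := by grind
  rw [schubertCut, h_lt, h_le, card_empty, add_zero]

/-- When `i ∈ D → i + 1 ∈ D`, or when `i + 1 ∈ I → i ∈ I`, the cut at `i + 1` is dominated by one of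
its neighbours. It is the only cut that sees a difference between `i` and `i + 1`. -/
theorem le_schubertRank_iff_forall_ne (h : i ∈ D → i + 1 ∈ I → i ∈ I ∨ i + 1 ∈ D) :
    m ≤ schubertRank D I ↔ ∀ k ≠ i + 1, m ≤ schubertCut D I k := by
  refine le_schubertRank_iff.trans ⟨fun hm k _ => hm k, fun hm k => ?_⟩
  obtain rfl | hk := eq_or_ne k (i + 1)
  · have hprev := hm i (by omega)
    have hnext := hm (i + 1 + 1) (by omega)
    have := schubertCut_succ D I i
    have := schubertCut_succ D I (i + 1)
    grind
  · exact hm k hk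

theorem swap_succ_lt_iff (hk : k ≠ i + 1) (x : ℕ) : Equiv.swap i (i + 1) x < k ↔ x < k := by
  rw [Equiv.swap_apply_def]
  split_ifs <;> omega

theorem le_swap_succ_iff (hk : k ≠ i + 1) (x : ℕ) : k ≤ Equiv.swap i (i + 1) x ↔ k ≤ x := by
  rw [← not_lt, swap_succ_lt_iff hk, not_lt]

theorem schubertCut_map_swap_left (hk : k ≠ i + 1) :
    schubertCut (D.map (Equiv.swap i (i + 1)).toEmbedding) I k = schubertCut D I k := by
  simp [schubertCut, filter_map, le_swap_succ_iff hk]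

theorem schubertCut_map_swap_right (hk : k ≠ i + 1) :
    schubertCut D (I.map (Equiv.swap i (i + 1)).toEmbedding) k = schubertCut D I k := by
  simp [schubertCut, filter_map, swap_succ_lt_iff hk]

theorem schubertRank_map_swap_right (hD : i ∈ D → i + 1 ∈ D) :
    schubertRank D (I.map (Equiv.swap i (i + 1)).toEmbedding) = schubertRank D I := by
  refine eq_of_forall_le_iff fun m => ?_
  rw [le_schubertRank_iff_forall_ne fun hi _ => Or.inr (hD hi),
    le_schubertRank_iff_forall_ne fun hi _ => Or.inr (hD hi)]
  exact forall₂_congr fun k hk => by rw [schubertCut_map_swap_right hk]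

theorem schubertRank_map_swap_left_le (hD : i ∈ D → i + 1 ∈ D) :
    schubertRank (D.map (Equiv.swap i (i + 1)).toEmbedding) I ≤ schubertRank D I := by
  refine (le_schubertRank_iff_forall_ne fun hi _ => Or.inr (hD hi)).2 fun k hk => ?_
  rw [← schubertCut_map_swap_left hk]
  exact schubertRank_le_schubertCut _ I k

theorem schubertRank_map_swap_left_eq (hD : i ∈ D → i + 1 ∈ D) (hI : i + 1 ∈ I → i ∈ I) :
    schubertRank (D.map (Equiv.swap i (i + 1)).toEmbedding) I = schubertRank D I := by
  refine le_antisymm (schubertRank_map_swap_left_le hD)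
    ((le_schubertRank_iff_forall_ne fun _ hi => Or.inl (hI hi)).2 fun k hk => ?_)
  rw [schubertCut_map_swap_left hk]
  exact schubertRank_le_schubertCut D I k

theorem card_inter_range_succ (S : Finset ℕ) (n : ℕ) :
    #(S ∩ range (n + 1)) = #(S ∩ range n) + if n ∈ S then 1 else 0 := by
  rw [range_add_one, inter_comm]
  split_ifs with h
  · rw [insert_inter_of_mem h, card_insert_of_notMem (by simp), inter_comm]
  · rw [insert_inter_of_notMem h, inter_comm, add_zero]

theorem schubertCut_inter_range_succ (D I : Finset ℕ) (n k : ℕ) :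
    schubertCut (D ∩ range (n + 1)) (I ∩ range (n + 1)) k =
      schubertCut (D ∩ range n) (I ∩ range n) k + (if n ∈ I ∧ n < k then 1 else 0) +
        (if n ∈ D ∧ k ≤ n then 1 else 0) := by
  simp only [schubertCut, ← filter_inter, card_inter_range_succ, mem_filter]
  omega

theorem schubertCut_inter_range_of_le (D I : Finset ℕ) (h : n ≤ k) :
    schubertCut (D ∩ range n) (I ∩ range n) k = #(I ∩ range n) := by
  have h_lt : {x ∈ I ∩ range n | x < k} = I ∩ range n := filter_true_of_mem (by grind)
  have h_le : {x ∈ D ∩ range n | k ≤ x} = ∅ := filter_false_of_mem (by grind)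
  rw [schubertCut, h_lt, h_le, card_empty, add_zero]

theorem schubertRank_inter_range_le (D I : Finset ℕ) (n : ℕ) :
    schubertRank (D ∩ range n) (I ∩ range n) ≤ #(I ∩ range n) :=
  (schubertRank_le_schubertCut _ _ n).trans (schubertCut_inter_range_of_le D I le_rfl).le

theorem schubertRank_inter_range_succ (D I : Finset ℕ) (n : ℕ) :
    schubertRank (D ∩ range (n + 1)) (I ∩ range (n + 1)) =
      min (schubertRank (D ∩ range n) (I ∩ range n) + if n ∈ D then 1 else 0)
        #(I ∩ range (n + 1)) := by
  refine eq_of_forall_le_iff fun m => ?_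
  rw [le_schubertRank_iff, le_min_iff, ← tsub_le_iff_right, le_schubertRank_iff]
  have of_le {k : ℕ} (hk : n ≤ k) := schubertCut_inter_range_of_le D I hk
  have of_lt {k : ℕ} (hk : n < k) := schubertCut_inter_range_of_le D I (Nat.succ_le_of_lt hk)
  have succ_of_le {k : ℕ} (hk : k ≤ n) :
      schubertCut (D ∩ range (n + 1)) (I ∩ range (n + 1)) k =
        schubertCut (D ∩ range n) (I ∩ range n) k + if n ∈ D then 1 else 0 := by
    simp [schubertCut_inter_range_succ, hk, hk.not_gt]
  refine ⟨fun hm => ⟨fun k => ?_, (hm (n + 1)).trans_eq (of_lt n.lt_succ_self)⟩,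
    fun ⟨hm, hm_card⟩ k => ?_⟩
  · obtain hk | hk := le_total k n
    · exact tsub_le_iff_right.2 ((hm k).trans_eq (succ_of_le hk))
    · rw [of_le hk, ← of_le le_rfl]
      exact tsub_le_iff_right.2 ((hm n).trans_eq (succ_of_le le_rfl))
  · obtain hk | hk := le_or_gt k n
    · rw [succ_of_le hk]
      exact tsub_le_iff_right.1 (hm k)
    · rwa [of_lt hk]

end SchubertRank

section Matching

theorem matchedPairsAux_concat_true (w : List Bool) (o : ℕ) :
    matchedPairsAux (w ++ [true]) o = matchedPairsAux w o := by
  fun_induction matchedPairsAux w o <;> simp_all [matchedPairsAux]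

theorem matchedPairsAux_concat_false (w : List Bool) (o : ℕ) :
    matchedPairsAux (w ++ [false]) o = min (matchedPairsAux w o + 1) (w.count true + o) := by
  fun_induction matchedPairsAux w o with
  | case1 o => cases o <;> simp [matchedPairsAux]
  | case2 w o ih => grind [matchedPairsAux]
  | case3 w ih => grind [matchedPairsAux]
  | case4 w o ih => grind [matchedPairsAux]

variable {D : Finset (ℕ × ℕ)} {I : Finset ℕ} {n : ℕ}

theorem mem_colSetNat {i j : ℕ} : i ∈ colSetNat D j ↔ (i, j) ∈ D := by
  simp [colSetNat]

theorem colWordNat_succ (n : ℕ) (D : Finset (ℕ × ℕ)) (j : ℕ) (I : Finset ℕ) :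
    colWordNat (n + 1) D j I = colWordNat n D j I ++
      if n ∈ colSetNat D j then (if n ∈ I then [] else [false])
      else (if n ∈ I then [true] else []) := by
  simp only [colWordNat, List.range_succ, List.filterMap_append, mem_colSetNat]
  split_ifs <;> simp [*]

theorem count_true_colWordNat (n : ℕ) (D : Finset (ℕ × ℕ)) (j : ℕ) (I : Finset ℕ) :
    (colWordNat n D j I).count true = #((I \ colSetNat D j) ∩ range n) := by
  induction n with
  | zero => simp [colWordNat]
  | succ n ih =>
    rw [colWordNat_succ, List.count_append, ih, card_inter_range_succ]
    split_ifs <;> simp_all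

theorem matchedPairs_colWordNat_succ (n : ℕ) (D : Finset (ℕ × ℕ)) (j : ℕ) (I : Finset ℕ) :
    matchedPairs (colWordNat (n + 1) D j I) =
      if n ∈ colSetNat D j \ I then
        min (matchedPairs (colWordNat n D j I) + 1) #((I \ colSetNat D j) ∩ range n)
      else matchedPairs (colWordNat n D j I) := by
  rw [colWordNat_succ, ← count_true_colWordNat]
  by_cases hD : n ∈ colSetNat D j <;> by_cases hI : n ∈ I <;>
    simp [matchedPairs, matchedPairsAux_concat_true, matchedPairsAux_concat_false, hD, hI]

theorem matchedPairs_colWordNat_add_card (n : ℕ) (D : Finset (ℕ × ℕ)) (j : ℕ) (I : Finset ℕ) :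
    matchedPairs (colWordNat n D j I) + #((colSetNat D j ∩ I) ∩ range n) =
      schubertRank (colSetNat D j ∩ range n) (I ∩ range n) := by
  induction n with
  | zero => simp [colWordNat, matchedPairs, matchedPairsAux, schubertRank_eq_card_of_subset]
  | succ n ih =>
    have h_le := schubertRank_inter_range_le (colSetNat D j) I n
    have h_split : #((I \ colSetNat D j) ∩ range n) + #((colSetNat D j ∩ I) ∩ range n) =
        #(I ∩ range n) := by
      rw [← card_sdiff_add_card_inter (I ∩ range n) (colSetNat D j)]
      congr 2 <;> grind
    rw [schubertRank_inter_range_succ, matchedPairs_colWordNat_succ, card_inter_range_succ,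
      card_inter_range_succ]
    by_cases hD : n ∈ colSetNat D j <;> by_cases hI : n ∈ I <;>
      simp only [hD, hI, mem_inter, mem_sdiff, not_true, not_false_eq_true, and_true, and_false,
        if_true, if_false] <;>
      omega

theorem thetaColNat_eq_schubertRank {j : ℕ} (hD : D ⊆ range n ×ˢ range n) (hI : I ⊆ range n) :
    thetaColNat n D j I = schubertRank (colSetNat D j) I := by
  have hcol : colSetNat D j ⊆ range n := fun i hi =>
    (mem_product.1 (hD (mem_colSetNat.1 hi))).1
  have := matchedPairs_colWordNat_add_card n D j I
  rwa [inter_eq_left.2 hcol, inter_eq_left.2 hI,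
    inter_eq_left.2 (inter_subset_left.trans hcol)] at this

theorem thetaNat_eq_sum_schubertRank (hD : D ⊆ range n ×ˢ range n) (hI : I ⊆ range n) :
    thetaNat n D I = ∑ j ∈ range n, schubertRank (colSetNat D j) I :=
  sum_congr rfl fun _ _ => thetaColNat_eq_schubertRank hD hI

theorem thetaNat_range_eq_card (hD : D ⊆ range n ×ˢ range n) : thetaNat n D (range n) = #D := by
  have hcol (j : ℕ) : schubertRank (colSetNat D j) (range n) = #{p ∈ D | p.2 = j} := by
    rw [schubertRank_eq_card_of_subset fun i hi => (mem_product.1 (hD (mem_colSetNat.1 hi))).1]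
    refine card_image_of_injOn fun p hp q hq hpq => ?_
    exact Prod.ext hpq ((mem_filter.1 hp).2.trans (mem_filter.1 hq).2.symm)
  rw [thetaNat_eq_sum_schubertRank hD subset_rfl, sum_congr rfl fun j _ => hcol j]
  exact (card_eq_sum_card_fiberwise fun p hp => (mem_product.1 (hD hp)).2).symm

theorem schubitopeNat_eq_basePolytope (hD : D ⊆ range n ×ˢ range n) :
    schubitopeNat n D = basePolytope (range n) fun I => (thetaNat n D I : ℝ) := by
  simp only [schubitopeNat, basePolytope, thetaNat_range_eq_card hD, mem_range, not_lt]

end Matching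

section Skyline

variable {α : ℕ →₀ ℕ} {I : Finset ℕ} {n i j : ℕ}

theorem skyline_subset (α : ℕ →₀ ℕ) (n : ℕ) : skyline α n ⊆ range n ×ˢ range n :=
  filter_subset _ _

theorem mem_colSetNat_skyline : i ∈ colSetNat (skyline α n) j ↔ (i < n ∧ j < n) ∧ j < α i := by
  simp [mem_colSetNat, skyline]

theorem succ_mem_colSetNat_skyline (hi : i + 1 < n) (hα : α i < α (i + 1)) :
    i ∈ colSetNat (skyline α n) j → i + 1 ∈ colSetNat (skyline α n) j := by
  simp only [mem_colSetNat_skyline]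
  omega

theorem colSetNat_skyline_equivMapDomain_swap (hi : i + 1 < n) :
    colSetNat (skyline (Finsupp.equivMapDomain (Equiv.swap i (i + 1)) α) n) j =
      (colSetNat (skyline α n) j).map (Equiv.swap i (i + 1)).toEmbedding := by
  ext x
  have hx : Equiv.swap i (i + 1) x < n ↔ x < n := swap_succ_lt_iff hi.ne' x
  rw [mem_map_equiv, mem_colSetNat_skyline, mem_colSetNat_skyline, Equiv.symm_swap, hx,
    Finsupp.equivMapDomain_apply, Equiv.symm_swap]

theorem thetaNat_skyline_map_swap (hi : i + 1 < n) (hα : α i < α (i + 1)) (hI : I ⊆ range n) :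
    thetaNat n (skyline α n) (I.map (Equiv.swap i (i + 1)).toEmbedding) =
      thetaNat n (skyline α n) I := by
  have hI' : I.map (Equiv.swap i (i + 1)).toEmbedding ⊆ range n :=
    map_perm_subset (fun x => by simpa using swap_succ_lt_iff hi.ne' x) hI
  rw [thetaNat_eq_sum_schubertRank (skyline_subset α n) hI',
    thetaNat_eq_sum_schubertRank (skyline_subset α n) hI]
  exact sum_congr rfl fun j _ => schubertRank_map_swap_right (succ_mem_colSetNat_skyline hi hα)

theorem thetaNat_skyline_equivMapDomain_swap_le (hi : i + 1 < n) (hα : α i < α (i + 1))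
    (hI : I ⊆ range n) :
    thetaNat n (skyline (Finsupp.equivMapDomain (Equiv.swap i (i + 1)) α) n) I ≤
      thetaNat n (skyline α n) I := by
  rw [thetaNat_eq_sum_schubertRank (skyline_subset _ n) hI,
    thetaNat_eq_sum_schubertRank (skyline_subset α n) hI]
  refine sum_le_sum fun j _ => ?_
  rw [colSetNat_skyline_equivMapDomain_swap hi]
  exact schubertRank_map_swap_left_le (succ_mem_colSetNat_skyline hi hα)

theorem thetaNat_skyline_equivMapDomain_swap_eq (hi : i + 1 < n) (hα : α i < α (i + 1))
    (hI : I ⊆ range n) (hiI : i + 1 ∈ I → i ∈ I) :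
    thetaNat n (skyline (Finsupp.equivMapDomain (Equiv.swap i (i + 1)) α) n) I =
      thetaNat n (skyline α n) I := by
  rw [thetaNat_eq_sum_schubertRank (skyline_subset _ n) hI,
    thetaNat_eq_sum_schubertRank (skyline_subset α n) hI]
  refine sum_congr rfl fun j _ => ?_
  rw [colSetNat_skyline_equivMapDomain_swap hi]
  exact schubertRank_map_swap_left_eq (succ_mem_colSetNat_skyline hi hα) hiI

theorem thetaNat_skyline_of_antitone (hα : Antitone α) (hle : ∀ i, α i ≤ n) (hI : I ⊆ range n) :
    thetaNat n (skyline α n) I = ∑ i ∈ I, α i := by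
  have hcol (j : ℕ) (hj : j ∈ range n) :
      schubertRank (colSetNat (skyline α n) j) I = #{i ∈ I | j < α i} := by
    have hlower : IsLowerSet (colSetNat (skyline α n) j : Set ℕ) := by
      intro x y hyx hx
      rw [mem_coe, mem_colSetNat_skyline] at hx ⊢
      exact ⟨⟨hyx.trans_lt hx.1.1, hx.1.2⟩, hx.2.trans_le (hα hyx)⟩
    rw [schubertRank_eq_card_inter_of_isLowerSet hlower]
    congr 1
    ext i
    simp only [mem_inter, mem_filter, mem_colSetNat_skyline]
    have := @hI i
    grind
  have hrow (i : ℕ) : #{j ∈ range n | j < α i} = α i := by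
    have hrange : {j ∈ range n | j < α i} = range (α i) := by
      have := hle i
      grind
    rw [hrange, card_range]
  rw [thetaNat_eq_sum_schubertRank (skyline_subset α n) hI, sum_congr rfl hcol]
  exact (sum_card_bipartiteAbove_eq_sum_card_bipartiteBelow fun j i => j < α i).trans
    (sum_congr rfl fun i _ => hrow i)

end Skyline

section KeyPolynomial

/-- Swapping an ascent `α i < α (i + 1)` decreases `∑ i * α i`. -/
theorem composition_induction {motive : (ℕ →₀ ℕ) → Prop}
    (antitone : ∀ α : ℕ →₀ ℕ, Antitone α → motive α)
    (ascent : ∀ (α : ℕ →₀ ℕ) (i : ℕ), α i < α (i + 1) →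
      motive (Finsupp.equivMapDomain (Equiv.swap i (i + 1)) α) → motive α)
    (α : ℕ →₀ ℕ) : motive α := by
  induction hw : Finsupp.weight id α using Nat.strong_induction_on generalizing α with
  | _ w ih =>
    subst hw
    by_cases hα : Antitone α
    · exact antitone α hα
    obtain ⟨i, hi⟩ : ∃ i, α i < α (i + 1) := by
      by_contra! h
      exact hα (antitone_nat_of_succ_le h)
    refine ascent α i hi (ih _ ?_ _ rfl)
    have hswap : Finsupp.equivMapDomain (Equiv.swap i (i + 1)) α +
        Finsupp.single (i + 1) (α (i + 1) - α i) = α + Finsupp.single i (α (i + 1) - α i) := by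
      ext x
      simp only [Finsupp.add_apply, Finsupp.equivMapDomain_apply, Equiv.symm_swap,
        Finsupp.single_apply, Equiv.swap_apply_def]
      grind
    have hweight := congrArg (Finsupp.weight id) hswap
    simp only [map_add, Finsupp.weight_single, id, smul_eq_mul] at hweight
    have := Nat.sub_pos_of_lt hi
    linarith

theorem spansBasePolytope_monomial {ι R : Type*} [CommSemiring R] [Nontrivial R] {s : Finset ι}
    {θ : Finset ι → ℕ} {d : ι →₀ ℕ} (hd_off : ∀ i ∉ s, d i = 0)
    (hd : ∀ I ⊆ s, ∑ i ∈ I, d i = θ I) : SpansBasePolytope s θ (monomial d (1 : R)) := by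
  have hsupp : (monomial d (1 : R)).support = {d} := by
    classical
    rw [support_monomial, if_neg one_ne_zero]
  refine ⟨fun e he => ?_, fun _ => ⟨d, by simp [hsupp], fun I hI => hd I hI.1⟩⟩
  obtain rfl : e = d := by simpa [hsupp] using he
  exact ⟨fun _ => zero_le, hd_off, hd s subset_rfl, fun I hI => (hd I hI).le⟩

theorem spansBasePolytope_key {Key : (ℕ →₀ ℕ) → MvPolynomial ℕ ℤ}
    (hbase : ∀ α : ℕ →₀ ℕ, Antitone α → Key α = monomial α 1)
    (hrec : ∀ (α : ℕ →₀ ℕ) (i : ℕ), α i < α (i + 1) →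
      IsDemazure i (i + 1) (Key (Finsupp.equivMapDomain (Equiv.swap i (i + 1)) α)) (Key α))
    {n : ℕ} (α : ℕ →₀ ℕ) (hsupp : ∀ i, α i ≠ 0 → i < n) (hle : ∀ i, α i ≤ n) :
    SpansBasePolytope (range n) (thetaNat n (skyline α n)) (Key α) := by
  induction α using composition_induction with
  | antitone α hα =>
    rw [hbase α hα]
    refine spansBasePolytope_monomial (fun i hi => ?_) fun I hI =>
      (thetaNat_skyline_of_antitone hα hle hI).symm
    exact by_contra fun h => hi (mem_range.2 (hsupp i h))
  | ascent α i hi ih =>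
    have hi_lt : i + 1 < n := hsupp (i + 1) (by omega)
    refine SpansBasePolytope.of_isDemazure (ih (fun x hx => ?_) fun x => ?_) (hrec α i hi)
      i.lt_succ_self.ne (mem_range.2 (by omega)) (mem_range.2 hi_lt)
      (fun I => thetaNat_skyline_map_swap hi_lt hi)
      (fun I => thetaNat_skyline_equivMapDomain_swap_le hi_lt hi)
      (fun I => thetaNat_skyline_equivMapDomain_swap_eq hi_lt hi)
    · rw [Finsupp.equivMapDomain_apply, Equiv.symm_swap] at hx
      exact (swap_succ_lt_iff hi_lt.ne' x).1 (hsupp _ hx)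
    · rw [Finsupp.equivMapDomain_apply]
      exact hle _

theorem stmt14_general (Key : (ℕ →₀ ℕ) → MvPolynomial ℕ ℤ)
    (hbase : ∀ α : ℕ →₀ ℕ, (∀ i j : ℕ, i ≤ j → α j ≤ α i) → Key α = monomial α 1)
    (hrec : ∀ (α : ℕ →₀ ℕ) (i : ℕ), α i < α (i + 1) →
      (X i - X (i + 1)) * Key α =
        X i * Key (Finsupp.equivMapDomain (Equiv.swap i (i + 1)) α) -
          rename (Equiv.swap i (i + 1))
            (X i * Key (Finsupp.equivMapDomain (Equiv.swap i (i + 1)) α)))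
    (α : ℕ →₀ ℕ) (n : ℕ) (hsupp : ∀ i, α i ≠ 0 → i < n)
    (hsup : α.support.sup α ≤ n) :
    newtonPolytopeNat (Key α) = schubitopeNat n (skyline α n) := by
  have hle (i : ℕ) : α i ≤ n := by
    obtain hi | hi := eq_or_ne (α i) 0
    · exact hi ▸ n.zero_le
    · exact (le_sup (Finsupp.mem_support_iff.2 hi)).trans hsup
  have hspan : SpansBasePolytope (range n) (thetaNat n (skyline α n)) (Key α) :=
    spansBasePolytope_key (fun β hβ => hbase β fun _ _ hij => hβ hij) hrec α hsupp hle
  rw [schubitopeNat_eq_basePolytope (skyline_subset α n)]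
  exact hspan.convexHull_eq

end KeyPolynomial

/-- The Newton polytope of the key polynomial `κ_α` equals the Schubitope `S_{D(α)}` of
the skyline diagram `D(α)` of `α`, where `l = max{i : α_i ≠ 0}` and
`n = max{l, α_1, …, α_l}`. -/
theorem stmt14 (Key : (ℕ →₀ ℕ) → MvPolynomial ℕ ℤ)
    -- If `α` is weakly decreasing then `κ_α = x_1^{α_1} x_2^{α_2} ⋯` (variables are
    -- `0`-indexed: the variable `X i` is `x_{i+1}` and `α i` is `α_{i+1}`).
    (hbase : ∀ α : ℕ →₀ ℕ, (∀ i j : ℕ, i ≤ j → α j ≤ α i) → Key α = monomial α 1)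
    -- If `α i < α (i+1)` then `κ_α = ∂_i (x_i κ_α̂)` where `α̂` swaps entries `i`, `i+1`:
    -- `(xᵢ - xᵢ₊₁) ⬝ κ_α = xᵢ κ_α̂ - sᵢ ⬝ (xᵢ κ_α̂)`.
    (hrec : ∀ (α : ℕ →₀ ℕ) (i : ℕ), α i < α (i + 1) →
      (X i - X (i + 1)) * Key α =
        X i * Key (Finsupp.equivMapDomain (Equiv.swap i (i + 1)) α) -
          rename (Equiv.swap i (i + 1))
            (X i * Key (Finsupp.equivMapDomain (Equiv.swap i (i + 1)) α)))
    (α : ℕ →₀ ℕ)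
    -- `l = max{i : α_i ≠ 0}` (`1`-indexed), i.e. `l` is least with `α_i = 0` for all `i ≥ l`
    (l n : ℕ) (hl₁ : ∀ i, α i ≠ 0 → i < l) (hl₂ : ∀ m, (∀ i, α i ≠ 0 → i < m) → l ≤ m)
    -- `n = max{l, α_1, …, α_l}`
    (hn : n = max l (α.support.sup α))
    :
    newtonPolytopeNat (Key α) = schubitopeNat n (skyline α n) := by
  exact stmt14_general Key hbase hrec α n (fun i hi => hn ▸ lt_max_of_lt_left (hl₁ i hi))
    (hn ▸ le_max_right _ _)
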